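/- Up to lattice equivalence, there are exactly 5 smooth 2-dimensional reflexive polygons, i.e., convex lattice polygons P ⊂ ℝ^2 with 0 in the interior, whose only interior lattice point is 0, and such that the primitive ray generators of each pair of adjacent vertices form a ℤ-basis of ℤ^2 (these correspond to ℙ^1×ℙ^1 and ℙ^2 blown up in at most 3 torus-fixed points). -/

import Mathlib

open Set

noncomputable section

def latPts (k : ℕ) : Set (Fin k → ℝ) :=
  Set.range (fun v : Fin k → ℤ => fun i => (v i : ℝ))

def castZ {k : ℕ} (v : Fin k → ℤ) : Fin k → ℝ := fun i => (v i : ℝ)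

/-- A smooth reflexive polygon: a convex lattice polygon with `0` as its only interior
lattice point, such that each pair of adjacent vertices (vertices joined by an edge on
the boundary) forms a `ℤ`-basis of `ℤ^2`. -/
def SmoothReflexivePolygon (Q : Set (Fin 2 → ℝ)) : Prop :=
  (∃ V : Finset (Fin 2 → ℤ), Q = convexHull ℝ (castZ '' (V : Set (Fin 2 → ℤ)))) ∧
  (0 : Fin 2 → ℝ) ∈ interior Q ∧
  interior Q ∩ latPts 2 = {0} ∧
  ∀ v w : Fin 2 → ℤ,
    castZ v ∈ Q.extremePoints ℝ → castZ w ∈ Q.extremePoints ℝ → v ≠ w →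
    segment ℝ (castZ v) (castZ w) ⊆ frontier Q →
    IsUnit (v 0 * w 1 - v 1 * w 0)

/-- Linear lattice equivalence by `GL_2(ℤ)`. -/
def LinEquiv (Q R : Set (Fin 2 → ℝ)) : Prop :=
  ∃ A B : Matrix (Fin 2) (Fin 2) ℤ, A * B = 1 ∧ B * A = 1 ∧
    R = (fun x : Fin 2 → ℝ => fun i => ∑ j, (A i j : ℝ) * x j) '' Q

/-!
Every nonzero lattice point `u` of a smooth reflexive polygon is a vertex: it lies on an edge, and
the endpoints of that edge form a basis, in which `u` has coefficients in `[0, 1]`. A triangle with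
vertices `0, u, v` and `|det (u, v)| ≥ 2` contains a further lattice point, which would be a vertex
of the polygon without being a vertex of the triangle; so all determinants of pairs of vertices lie
in `{0, ±1}`. Hence, in a suitable basis, all vertices are among the six units of the Eisenstein
integers. Conversely, for any set `C` of these units, the norm form shows that the nonzero lattice
points of the hull of `C` are exactly the elements of `C`, and the hull is smooth reflexive as soon
as `0` is interior. Up to rotation there are five such `C`; they are told apart by their number of
elements and by central symmetry.
-/

open scoped Matrix

section ConvexSets

variable {E : Type*} [AddCommGroup E] [Module ℝ E]

lemma card_le_two_of_affineIndependent_of_apply_eq (hE : Module.finrank ℝ E = 2) {ι : Type*}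
    [Fintype ι] {z : ι → E} (hz : AffineIndependent ℝ z) {f : Module.Dual ℝ E} (hf : f ≠ 0) {c : ℝ}
    (hc : ∀ i, f (z i) = c) : Fintype.card ι ≤ 2 := by
  have : FiniteDimensional ℝ E := .of_finrank_pos (by omega)
  have hspan : vectorSpan ℝ (range z) ≤ LinearMap.ker f := by
    rw [vectorSpan, Submodule.span_le]
    rintro _ ⟨_, ⟨i, rfl⟩, _, ⟨j, rfl⟩, rfl⟩
    simp [hc]
  have hker : Module.finrank ℝ (LinearMap.ker f) < 2 :=
    hE ▸ Submodule.finrank_lt (by rwa [Ne, LinearMap.ker_eq_top])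
  have := hz.card_le_finrank_succ
  have := Submodule.finrank_mono hspan
  omega

lemma exists_mem_segment_of_mem_convexHull_of_apply_le (hE : Module.finrank ℝ E = 2)
    {s : Set E} {f : Module.Dual ℝ E} (hf : f ≠ 0) {x : E} (hx : x ∈ convexHull ℝ s)
    (hmax : ∀ y ∈ s, f y ≤ f x) :
    ∃ y ∈ s, ∃ z ∈ s, x ∈ segment ℝ y z ∧ f y = f x ∧ f z = f x := by
  obtain ⟨ι, _, z, w, hzs, hz, hw, hw1, rfl⟩ := eq_pos_convex_span_of_mem_convexHull hx
  set x := ∑ i, w i • z i with hxz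
  have hface : ∀ i, f (z i) = f x := by
    have hsum : ∑ i, w i * (f x - f (z i)) = 0 := by
      simp [mul_sub, ← Finset.sum_mul, hw1, hxz]
    have hnonneg : ∀ i ∈ Finset.univ, 0 ≤ w i * (f x - f (z i)) := fun i _ ↦
      mul_nonneg (hw i).le (sub_nonneg.2 (hmax _ (hzs ⟨i, rfl⟩)))
    intro i
    have := (Finset.sum_eq_zero_iff_of_nonneg hnonneg).1 hsum i (Finset.mem_univ i)
    linarith [(mul_eq_zero.1 this).resolve_left (hw i).ne']
  have hcard := card_le_two_of_affineIndependent_of_apply_eq hE hz hf hface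
  obtain ⟨i, -⟩ : (Finset.univ : Finset ι).Nonempty :=
    Finset.nonempty_of_sum_ne_zero (hw1.trans_ne one_ne_zero)
  obtain ⟨j, hj⟩ : ∃ j, ∀ k, k = i ∨ k = j := by
    classical
    have : Nonempty ι := ⟨i⟩
    have herase : (Finset.univ.erase i).card ≤ 1 := by
      rw [Finset.card_erase_of_mem (Finset.mem_univ i), Finset.card_univ]
      omega
    obtain ⟨j, hj⟩ := Finset.card_le_one_iff_subset_singleton.1 herase
    exact ⟨j, fun k ↦ or_iff_not_imp_left.2 fun hk ↦ by simpa [hk] using @hj k⟩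
  refine ⟨z i, hzs ⟨i, rfl⟩, z j, hzs ⟨j, rfl⟩, ?_, hface i, hface j⟩
  rw [← convexHull_pair]
  refine (convex_convexHull ℝ _).sum_mem (fun k _ ↦ (hw k).le) hw1 fun k _ ↦ ?_
  exact subset_convexHull ℝ _ ((hj k).imp (congrArg z) (congrArg z))

lemma convexHull_extremePoints_convexHull_of_finite [TopologicalSpace E] [T2Space E]
    [IsTopologicalAddGroup E] [ContinuousSMul ℝ E] [LocallyConvexSpace ℝ E]
    {s : Set E} (hs : s.Finite) :
    convexHull ℝ ((convexHull ℝ s).extremePoints ℝ) = convexHull ℝ s := by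
  have hclosed : IsClosed (convexHull ℝ ((convexHull ℝ s).extremePoints ℝ)) :=
    (hs.subset extremePoints_convexHull_subset).isClosed_convexHull ℝ
  rw [← hclosed.closure_eq]
  exact closure_convexHull_extremePoints (hs.isCompact_convexHull ℝ) (convex_convexHull ℝ s)

variable [TopologicalSpace E] [IsTopologicalAddGroup E] [ContinuousSMul ℝ E]

lemma notMem_interior_of_forall_apply_le {f : StrongDual ℝ E} (hf : f ≠ 0) {K : Set E} {x : E}
    (hx : ∀ y ∈ K, f y ≤ f x) : x ∉ interior K := by
  intro hxK
  have hpre : f ⁻¹' interior (Iic (f x)) = interior (f ⁻¹' Iic (f x)) :=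
    (f.isOpenMap_of_ne_zero hf).preimage_interior_eq_interior_preimage f.continuous _
  have hlt : x ∈ f ⁻¹' interior (Iic (f x)) := hpre ▸ interior_mono hx hxK
  simp at hlt

lemma exists_apply_neg_of_zero_mem_interior_convexHull {f : StrongDual ℝ E} (hf : f ≠ 0)
    {s : Set E} (hs : 0 ∈ interior (convexHull ℝ s)) : ∃ x ∈ s, f x < 0 := by
  by_contra! h
  have hull : convexHull ℝ s ⊆ {x | 0 ≤ f x} :=
    convexHull_min h (convex_halfSpace_ge f.toLinearMap.isLinear 0)
  exact notMem_interior_of_forall_apply_le (neg_ne_zero.2 hf) (fun y hy ↦ by simpa using hull hy) hs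

lemma exists_mem_segment_subset_frontier (hE : Module.finrank ℝ E = 2) {s K : Set E}
    (hs : convexHull ℝ s = K) (hK : (interior K).Nonempty) {x : E} (hx : x ∈ K)
    (hxi : x ∉ interior K) :
    ∃ y ∈ s, ∃ z ∈ s, x ∈ segment ℝ y z ∧ segment ℝ y z ⊆ frontier K := by
  obtain rfl := hs
  obtain ⟨f, hf, hmax⟩ :=
    geometric_hahn_banach_of_nonempty_interior_point (convex_convexHull ℝ s) hxi hK
  obtain ⟨y, hy, z, hz, hxyz, hfy, hfz⟩ := exists_mem_segment_of_mem_convexHull_of_apply_le hE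
    (fun h ↦ hf (ContinuousLinearMap.coe_inj.1 h)) hx fun y hy ↦ hmax y (subset_convexHull ℝ s hy)
  refine ⟨y, hy, z, hz, hxyz, fun p hp ↦ ⟨subset_closure ?_, ?_⟩⟩
  · exact (convex_convexHull ℝ s).segment_subset (subset_convexHull ℝ s hy)
      (subset_convexHull ℝ s hz) hp
  · have hfp : f p = f x := by
      obtain ⟨a, b, -, -, hab, rfl⟩ := hp
      have hfy : f y = f x := hfy
      have hfz : f z = f x := hfz
      rw [map_add, map_smul, map_smul, hfy, hfz, ← add_smul, hab, one_smul]
    exact notMem_interior_of_forall_apply_le hf fun q hq ↦ hfp ▸ hmax q hq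

end ConvexSets

lemma zero_mem_interior_convexHull_of_sum_eq_zero {E ι : Type*} [NormedAddCommGroup E]
    [NormedSpace ℝ E] [FiniteDimensional ℝ E] {v : ι → E} {t : Finset ι} (ht : t.Nonempty)
    (hspan : Submodule.span ℝ (v '' t) = ⊤) (hsum : ∑ i ∈ t, v i = 0) :
    (0 : E) ∈ interior (convexHull ℝ (v '' t)) := by
  have hmem : ∀ i ∈ t, v i ∈ convexHull ℝ (v '' t) := fun i hi ↦
    subset_convexHull ℝ _ (mem_image_of_mem v hi)
  have hzero : (0 : E) ∈ convexHull ℝ (v '' t) := by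
    have := t.centerMass_mem_convexHull (R := ℝ) (w := 1) (z := v) (fun _ _ ↦ zero_le_one)
      (by simpa using ht) (fun i hi ↦ mem_image_of_mem v hi)
    simpa [Finset.centerMass, hsum] using this
  have hint : (interior (convexHull ℝ (v '' t))).Nonempty := by
    rw [interior_convexHull_nonempty_iff_affineSpan_eq_top,
      AffineSubspace.affineSpan_eq_top_iff_vectorSpan_eq_top_of_nonempty _ _ _
        ((Finset.coe_nonempty.2 ht).image v),
      eq_top_iff, ← hspan, Submodule.span_le, ← direction_affineSpan]
    intro x hx
    simpa using AffineSubspace.vsub_mem_direction (subset_affineSpan ℝ _ hx)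
      (convexHull_subset_affineSpan _ hzero)
  by_contra h
  obtain ⟨f, hf, hmax⟩ :=
    geometric_hahn_banach_of_nonempty_interior_point (convex_convexHull ℝ _) h hint
  have hvanish : ∀ i ∈ t, f (v i) = 0 := by
    rw [← Finset.sum_eq_zero_iff_of_nonpos fun i hi ↦ by simpa using hmax _ (hmem i hi),
      ← map_sum, hsum, map_zero]
  refine hf (ContinuousLinearMap.coe_inj.1 (LinearMap.ext_on hspan ?_))
  rintro _ ⟨i, hi, rfl⟩
  exact hvanish i hi

section Lattice

variable {k : ℕ}

lemma castZ_injective : Function.Injective (castZ : (Fin k → ℤ) → Fin k → ℝ) := fun _ _ h ↦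
  funext fun i ↦ Int.cast_injective (congrFun h i)

@[simp]
lemma castZ_zero : castZ (0 : Fin k → ℤ) = 0 := funext fun _ ↦ Int.cast_zero

lemma castZ_neg (v : Fin k → ℤ) : castZ (-v) = -castZ v := funext fun _ ↦ Int.cast_neg _

lemma dotProduct_castZ (a v : Fin k → ℤ) : castZ a ⬝ᵥ castZ v = (a ⬝ᵥ v : ℤ) :=
  (RingHom.map_dotProduct (Int.castRingHom ℝ) a v).symm

lemma norm_castZ_lt_one_iff {v : Fin k → ℤ} : ‖castZ v‖ < 1 ↔ v = 0 := by
  rw [pi_norm_lt_iff one_pos, funext_iff]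
  refine forall_congr' fun i ↦ ?_
  rw [castZ, Real.norm_eq_abs, ← Int.cast_abs, ← Int.cast_one, Int.cast_lt, Int.abs_lt_one_iff,
    Pi.zero_apply]

/-- The lattice polytope spanned by a set of integer points. -/
def latticeHull (S : Set (Fin k → ℤ)) : Set (Fin k → ℝ) := convexHull ℝ (castZ '' S)

lemma convex_latticeHull (S : Set (Fin k → ℤ)) : Convex ℝ (latticeHull S) := convex_convexHull ℝ _

lemma castZ_mem_latticeHull {S : Set (Fin k → ℤ)} {v : Fin k → ℤ} (hv : v ∈ S) :
    castZ v ∈ latticeHull S := subset_convexHull ℝ _ (mem_image_of_mem castZ hv)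

lemma dotProduct_lt_of_mem_latticeHull {S : Set (Fin k → ℤ)} {a v : Fin k → ℤ} {c : ℤ}
    (hS : ∀ u ∈ S, a ⬝ᵥ u < c) (hv : castZ v ∈ latticeHull S) : a ⬝ᵥ v < c := by
  have hconv : Convex ℝ {x : Fin k → ℝ | castZ a ⬝ᵥ x < c} :=
    convex_halfSpace_lt (dotProductBilin ℝ ℝ (castZ a)).isLinear _
  have hsub : latticeHull S ⊆ {x | castZ a ⬝ᵥ x < c} := by
    refine convexHull_min ?_ hconv
    rintro _ ⟨u, hu, rfl⟩
    simpa [dotProduct_castZ] using hS u hu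
  simpa [dotProduct_castZ] using hsub hv

lemma exists_dotProduct_neg_of_zero_mem_interior_latticeHull {S : Set (Fin k → ℤ)}
    (hS : 0 ∈ interior (latticeHull S)) {a : Fin k → ℤ} (ha : a ≠ 0) : ∃ v ∈ S, a ⬝ᵥ v < 0 := by
  let f : StrongDual ℝ (Fin k → ℝ) := (dotProductBilin ℝ ℝ (castZ a)).toContinuousLinearMap
  have hf : ∀ v, f (castZ v) = (a ⬝ᵥ v : ℤ) := dotProduct_castZ a
  have hf0 : f ≠ 0 := fun h ↦ ha <| by
    simpa [h] using (hf a).symm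
  obtain ⟨_, ⟨v, hv, rfl⟩, hneg⟩ := exists_apply_neg_of_zero_mem_interior_convexHull hf0 hS
  exact ⟨v, hv, by simpa [hf] using hneg⟩

/-- The nonzero integer points of a subset of `ℝᵏ`. -/
def nonzeroLatticePoints (Q : Set (Fin k → ℝ)) : Set (Fin k → ℤ) := {v | v ≠ 0 ∧ castZ v ∈ Q}

/-- The action of integer matrices on `ℝᵏ`. -/
def intMatrixAction : Matrix (Fin k) (Fin k) ℤ →+* Module.End ℝ (Fin k → ℝ) :=
  (Matrix.toLinAlgEquiv' : Matrix (Fin k) (Fin k) ℝ ≃ₐ[ℝ] _).toRingHom.comp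
    (Int.castRingHom ℝ).mapMatrix

lemma intMatrixAction_castZ (A : Matrix (Fin k) (Fin k) ℤ) (v : Fin k → ℤ) :
    intMatrixAction A (castZ v) = castZ (A *ᵥ v) :=
  funext fun i ↦ (RingHom.map_mulVec (Int.castRingHom ℝ) A v i).symm

lemma intMatrixAction_mul_apply (A B : Matrix (Fin k) (Fin k) ℤ) (x : Fin k → ℝ) :
    intMatrixAction (A * B) x = intMatrixAction A (intMatrixAction B x) := by
  rw [map_mul, Module.End.mul_apply]

lemma image_intMatrixAction_eq_preimage (A : GL (Fin k) ℤ) (Q : Set (Fin k → ℝ)) :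
    intMatrixAction A '' Q = intMatrixAction ↑A⁻¹ ⁻¹' Q := by
  refine congrFun (image_eq_preimage_of_inverse ?_ ?_) Q <;> intro x <;>
    simp [← intMatrixAction_mul_apply]

lemma image_intMatrixAction_latticeHull (A : Matrix (Fin k) (Fin k) ℤ) (S : Set (Fin k → ℤ)) :
    intMatrixAction A '' latticeHull S = latticeHull ((A *ᵥ ·) '' S) := by
  simp only [latticeHull, LinearMap.image_convexHull, image_image, intMatrixAction_castZ]

lemma nonzeroLatticePoints_image (A : GL (Fin k) ℤ) (Q : Set (Fin k → ℝ)) :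
    nonzeroLatticePoints (intMatrixAction A '' Q) = (A.1 *ᵥ ·) '' nonzeroLatticePoints Q := by
  rw [image_eq_preimage_of_inverse (g := (A⁻¹.1 *ᵥ ·)) (fun v ↦ by simp) (fun v ↦ by simp)]
  ext v
  have hne : A⁻¹.1 *ᵥ v = 0 ↔ v = 0 :=
    (Matrix.mulVec_injective_of_isUnit A⁻¹.isUnit).eq_iff' (Matrix.mulVec_zero _)
  rw [image_intMatrixAction_eq_preimage]
  simp only [nonzeroLatticePoints, mem_ofPred_eq, mem_preimage, intMatrixAction_castZ, ne_eq, hne]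

end Lattice

lemma linEquiv_iff {Q R : Set (Fin 2 → ℝ)} :
    LinEquiv Q R ↔ ∃ A : GL (Fin 2) ℤ, R = intMatrixAction A '' Q :=
  ⟨fun ⟨A, B, hAB, hBA, h⟩ ↦ ⟨⟨A, B, hAB, hBA⟩, h⟩,
    fun ⟨A, h⟩ ↦ ⟨A, A⁻¹.1, A.mul_inv, A.inv_mul, h⟩⟩

lemma LinEquiv.symm {Q R : Set (Fin 2 → ℝ)} (h : LinEquiv Q R) : LinEquiv R Q := by
  obtain ⟨A, rfl⟩ := linEquiv_iff.1 h
  refine linEquiv_iff.2 ⟨A⁻¹, ?_⟩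
  simp [image_image, ← intMatrixAction_mul_apply]

lemma LinEquiv.trans {Q R S : Set (Fin 2 → ℝ)} (hQR : LinEquiv Q R) (hRS : LinEquiv R S) :
    LinEquiv Q S := by
  obtain ⟨A, rfl⟩ := linEquiv_iff.1 hQR
  obtain ⟨B, rfl⟩ := linEquiv_iff.1 hRS
  refine linEquiv_iff.2 ⟨B * A, ?_⟩
  simp only [image_image, ← intMatrixAction_mul_apply, Units.val_mul]

lemma LinEquiv.zero_mem_interior {Q R : Set (Fin 2 → ℝ)} (h : LinEquiv Q R)
    (hQ : 0 ∈ interior Q) : 0 ∈ interior R := by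
  obtain ⟨A, rfl⟩ := linEquiv_iff.1 h
  rw [image_intMatrixAction_eq_preimage]
  refine preimage_interior_subset_interior_preimage
    (LinearMap.continuous_of_finiteDimensional _) ?_
  rwa [mem_preimage, map_zero]

section Wedge

variable {R : Type*} [CommRing R]

/-- The two-dimensional cross product: the determinant of the matrix with columns `u` and `v`. -/
def wedge (u v : Fin 2 → R) : R := u 0 * v 1 - u 1 * v 0

@[simp]
lemma wedge_self (u : Fin 2 → R) : wedge u u = 0 := by rw [wedge]; ring

lemma wedge_swap (u v : Fin 2 → R) : wedge v u = -wedge u v := by simp only [wedge]; ring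

lemma wedge_smul_add_smul_right (a b : R) (u v w : Fin 2 → R) :
    wedge w (a • u + b • v) = a * wedge w u + b * wedge w v := by
  simp only [wedge, Pi.add_apply, Pi.smul_apply, smul_eq_mul]; ring

lemma wedge_smul_eq (u v w : Fin 2 → R) : wedge u v • w = wedge w v • u + wedge u w • v := by
  funext i
  fin_cases i <;> simp [wedge] <;> ring

lemma wedge_castZ (u v : Fin 2 → ℤ) : wedge (castZ u) (castZ v) = ((wedge u v : ℤ) : ℝ) := by
  simp [wedge, castZ]

end Wedge

lemma exists_wedge_neg_of_zero_mem_interior_latticeHull {S : Set (Fin 2 → ℤ)}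
    (hS : 0 ∈ interior (latticeHull S)) {u : Fin 2 → ℤ} (hu : u ≠ 0) :
    ∃ v ∈ S, wedge u v < 0 := by
  have ha : ![-u 1, u 0] ≠ 0 := fun h ↦ hu <| by
    funext i
    fin_cases i <;> simp_all
  obtain ⟨v, hv, hneg⟩ := exists_dotProduct_neg_of_zero_mem_interior_latticeHull hS ha
  refine ⟨v, hv, ?_⟩
  simp only [Matrix.vec2_dotProduct, Matrix.cons_val_zero, Matrix.cons_val_one] at hneg
  rw [wedge]
  linarith

namespace SmoothReflexivePolygon

variable {Q : Set (Fin 2 → ℝ)}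

lemma convexHull_extremePoints (hQ : SmoothReflexivePolygon Q) :
    convexHull ℝ (Q.extremePoints ℝ) = Q := by
  obtain ⟨V, rfl⟩ := hQ.1
  exact convexHull_extremePoints_convexHull_of_finite (V.finite_toSet.image castZ)

lemma eq_castZ_of_mem_extremePoints (hQ : SmoothReflexivePolygon Q) {x : Fin 2 → ℝ}
    (hx : x ∈ Q.extremePoints ℝ) : ∃ v ∈ nonzeroLatticePoints Q, castZ v = x := by
  have hx0 : x ≠ 0 := by
    rintro rfl
    exact disjoint_left.1 (disjoint_interior_extremePoints Q) hQ.2.1 hx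
  obtain ⟨V, hV⟩ := hQ.1
  have hxV : x ∈ castZ '' (V : Set (Fin 2 → ℤ)) :=
    extremePoints_convexHull_subset (𝕜 := ℝ) (hV ▸ hx)
  obtain ⟨v, -, rfl⟩ := hxV
  exact ⟨v, ⟨fun h ↦ hx0 (h ▸ castZ_zero), extremePoints_subset hx⟩, rfl⟩

lemma notMem_interior (hQ : SmoothReflexivePolygon Q) {v : Fin 2 → ℤ} (hv : v ≠ 0) :
    castZ v ∉ interior Q := by
  intro h
  have hmem : castZ v ∈ interior Q ∩ latPts 2 := ⟨h, v, rfl⟩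
  rw [hQ.2.2.1] at hmem
  exact hv (castZ_injective (hmem.trans castZ_zero.symm))

lemma castZ_mem_extremePoints (hQ : SmoothReflexivePolygon Q) {u : Fin 2 → ℤ}
    (hu : u ∈ nonzeroLatticePoints Q) : castZ u ∈ Q.extremePoints ℝ := by
  obtain ⟨y, hy, z, hz, huyz, hyz⟩ := exists_mem_segment_subset_frontier (by simp)
    hQ.convexHull_extremePoints ⟨0, hQ.2.1⟩ hu.2 (hQ.notMem_interior hu.1)
  obtain ⟨v, -, rfl⟩ := hQ.eq_castZ_of_mem_extremePoints hy
  obtain ⟨w, -, rfl⟩ := hQ.eq_castZ_of_mem_extremePoints hz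
  obtain rfl | hvw := eq_or_ne v w
  · rw [segment_same, mem_singleton_iff] at huyz
    rwa [huyz]
  have hunit : IsUnit (wedge v w) := hQ.2.2.2 v w hy hz hvw hyz
  obtain ⟨a, b, ha, hb, hab, huv⟩ := huyz
  have hbu : ((wedge v u : ℤ) : ℝ) = b * (wedge v w : ℤ) := by
    rw [← wedge_castZ, ← wedge_castZ, ← huv, wedge_smul_add_smul_right, wedge_self,
      mul_zero, zero_add]
  obtain ⟨n, rfl⟩ : ∃ n : ℤ, b = n := by
    obtain h | h := Int.isUnit_iff.1 hunit <;> rw [h] at hbu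
    · exact ⟨wedge v u, by simpa using hbu.symm⟩
    · exact ⟨-wedge v u, by push_cast; simp [hbu]⟩
  have hn : n = 0 ∨ n = 1 := by
    have : n ≤ 1 := by exact_mod_cast (by linarith : (n : ℝ) ≤ 1)
    have : 0 ≤ n := by exact_mod_cast hb
    omega
  obtain rfl | rfl := hn
  · have : a = 1 := by simpa using hab
    rwa [← huv, this, Int.cast_zero, one_smul, zero_smul, add_zero]
  · have : a = 0 := by simpa using hab
    rwa [← huv, this, Int.cast_one, one_smul, zero_smul, zero_add]

lemma latticeHull_nonzeroLatticePoints (hQ : SmoothReflexivePolygon Q) :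
    latticeHull (nonzeroLatticePoints Q) = Q := by
  have hext : castZ '' nonzeroLatticePoints Q = Q.extremePoints ℝ :=
    Subset.antisymm (image_subset_iff.2 fun _ ↦ hQ.castZ_mem_extremePoints)
      fun _ ↦ hQ.eq_castZ_of_mem_extremePoints
  rw [latticeHull, hext, hQ.convexHull_extremePoints]

lemma exists_wedge_neg (hQ : SmoothReflexivePolygon Q) {u : Fin 2 → ℤ} (hu : u ≠ 0) :
    ∃ v ∈ nonzeroLatticePoints Q, wedge u v < 0 :=
  exists_wedge_neg_of_zero_mem_interior_latticeHull
    (hQ.latticeHull_nonzeroLatticePoints.symm ▸ hQ.2.1) hu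

end SmoothReflexivePolygon

lemma castZ_mem_convexHull_of_wedge {u v p : Fin 2 → ℤ} (huv : 0 < wedge u v)
    (hpv : 0 ≤ wedge p v) (hup : 0 ≤ wedge u p) (hsum : wedge p v + wedge u p ≤ wedge u v) :
    castZ p ∈ convexHull ℝ {0, castZ u, castZ v} := by
  set d : ℝ := ((wedge u v : ℤ) : ℝ) with hd
  set a : ℝ := ((wedge p v : ℤ) : ℝ) with ha
  set b : ℝ := ((wedge u p : ℤ) : ℝ) with hb
  have hd0 : 0 < d := Int.cast_pos.2 huv
  have ha0 : 0 ≤ a := Int.cast_nonneg hpv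
  have hb0 : 0 ≤ b := Int.cast_nonneg hup
  have habd : a + b ≤ d := by rw [ha, hb, hd]; exact_mod_cast hsum
  have hp : d • castZ p = a • castZ u + b • castZ v := by
    rw [hd, ha, hb, ← wedge_castZ, ← wedge_castZ, ← wedge_castZ, wedge_smul_eq]
  have hcomb : (a / d) • castZ u + (b / d) • castZ v = castZ p := by
    rw [← inv_smul_smul₀ hd0.ne' (castZ p), hp]
    module
  have hcoeff : (d - a - b) / d + a / d + b / d = 1 := by field
  have hw : 0 ≤ (d - a - b) / d ∧ 0 ≤ a / d ∧ 0 ≤ b / d :=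
    ⟨div_nonneg (by linarith) hd0.le, div_nonneg ha0 hd0.le, div_nonneg hb0 hd0.le⟩
  have := (convex_convexHull ℝ {0, castZ u, castZ v}).sum_mem (t := .univ)
    (w := ![(d - a - b) / d, a / d, b / d]) (z := ![0, castZ u, castZ v])
    (by simpa [Fin.forall_fin_succ] using hw) (by simpa [Fin.sum_univ_three] using hcoeff)
    fun i _ ↦ subset_convexHull ℝ _ (by fin_cases i <;> simp)
  simpa [Fin.sum_univ_three, hcomb] using this

lemma exists_ne_zero_wedge_mem_Ico {u v : Fin 2 → ℤ} (huv : 1 < wedge u v) :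
    ∃ p ≠ 0, wedge p v ∈ Ico 0 (wedge u v) ∧ wedge u p ∈ Ico 0 (wedge u v) := by
  set d := wedge u v
  by_contra! h
  have hdvd : ∀ r, d ∣ wedge r v ∧ d ∣ wedge u r := by
    intro r
    set p := r - (wedge r v / d) • u - (wedge u r / d) • v
    have hpv : wedge p v = wedge r v % d := by
      have : ∀ m n : ℤ, wedge (r - m • u - n • v) v = wedge r v - wedge u v * m := fun m n ↦ by
        simp only [wedge, Pi.sub_apply, Pi.smul_apply, smul_eq_mul]; ring
      rw [this, ← Int.emod_def]
    have hup : wedge u p = wedge u r % d := by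
      have : ∀ m n : ℤ, wedge u (r - m • u - n • v) = wedge u r - wedge u v * n := fun m n ↦ by
        simp only [wedge, Pi.sub_apply, Pi.smul_apply, smul_eq_mul]; ring
      rw [this, ← Int.emod_def]
    have hmod : ∀ n : ℤ, n % d ∈ Ico 0 d := fun n ↦
      ⟨Int.emod_nonneg n (by omega), Int.emod_lt_of_pos n (by omega)⟩
    have hp0 : p = 0 := by_contra fun hne ↦ h p hne (hpv ▸ hmod _) (hup ▸ hmod _)
    exact ⟨Int.dvd_of_emod_eq_zero (hpv.symm.trans (by simp [hp0, wedge])),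
      Int.dvd_of_emod_eq_zero (hup.symm.trans (by simp [hp0, wedge]))⟩
  have hu0 : d ∣ u 0 := by simpa [wedge] using (hdvd ![0, 1]).2
  have hu1 : d ∣ u 1 := by simpa [wedge] using (hdvd ![1, 0]).2
  have hv0 : d ∣ v 0 := by simpa [wedge] using (hdvd ![0, 1]).1
  have hv1 : d ∣ v 1 := by simpa [wedge] using (hdvd ![1, 0]).1
  have hdd : d * d ∣ d := dvd_sub (mul_dvd_mul hu0 hv1) (mul_dvd_mul hu1 hv0)
  have := Int.le_of_dvd (by omega) hdd
  nlinarith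

lemma exists_castZ_mem_convexHull_of_one_lt_wedge {u v : Fin 2 → ℤ} (huv : 1 < wedge u v) :
    ∃ p, p ≠ 0 ∧ p ≠ u ∧ p ≠ v ∧ castZ p ∈ convexHull ℝ {0, castZ u, castZ v} := by
  obtain ⟨p, hp0, ⟨ha0, ha⟩, hb0, hb⟩ := exists_ne_zero_wedge_mem_Ico huv
  obtain hab | hab := le_or_gt (wedge p v + wedge u p) (wedge u v)
  · refine ⟨p, hp0, ?_, ?_, castZ_mem_convexHull_of_wedge (by omega) ha0 hb0 hab⟩ <;>
      rintro rfl <;> omega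
  -- Otherwise the reflection of `p` in the midpoint of `u` and `v` lies in the triangle.
  · have hqv : wedge (u + v - p) v = wedge u v - wedge p v := by
      simp only [wedge, Pi.add_apply, Pi.sub_apply]; ring
    have huq : wedge u (u + v - p) = wedge u v - wedge u p := by
      simp only [wedge, Pi.add_apply, Pi.sub_apply]; ring
    set q := u + v - p
    have hq0 : q ≠ 0 := fun h ↦ by
      have : wedge (0 : Fin 2 → ℤ) v = 0 := by simp [wedge]
      rw [h] at hqv
      omega
    refine ⟨q, hq0, fun h ↦ ?_, fun h ↦ ?_, castZ_mem_convexHull_of_wedge ?_ ?_ ?_ ?_⟩ <;>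
      first | omega | (rw [h] at hqv huq; omega)

namespace SmoothReflexivePolygon

variable {Q : Set (Fin 2 → ℝ)}

lemma wedge_le_one (hQ : SmoothReflexivePolygon Q) {u v : Fin 2 → ℤ}
    (hu : u ∈ nonzeroLatticePoints Q) (hv : v ∈ nonzeroLatticePoints Q) : wedge u v ≤ 1 := by
  by_contra! huv
  obtain ⟨p, hp0, hpu, hpv, hp⟩ := exists_castZ_mem_convexHull_of_one_lt_wedge huv
  have htri : convexHull ℝ {0, castZ u, castZ v} ⊆ Q := by
    have hconv : Convex ℝ Q := hQ.latticeHull_nonzeroLatticePoints ▸ convex_latticeHull _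
    refine convexHull_min ?_ hconv
    rintro _ (rfl | rfl | rfl)
    exacts [interior_subset hQ.2.1, hu.2, hv.2]
  have hpext : castZ p ∈ (convexHull ℝ {0, castZ u, castZ v}).extremePoints ℝ :=
    inter_extremePoints_subset_extremePoints_of_subset htri
      ⟨hp, hQ.castZ_mem_extremePoints ⟨hp0, htri hp⟩⟩
  obtain h | h | h := extremePoints_convexHull_subset hpext
  exacts [hp0 (castZ_injective (h.trans castZ_zero.symm)), hpu (castZ_injective h),
    hpv (castZ_injective h)]

lemma abs_wedge_le_one (hQ : SmoothReflexivePolygon Q) {u v : Fin 2 → ℤ}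
    (hu : u ∈ nonzeroLatticePoints Q) (hv : v ∈ nonzeroLatticePoints Q) : |wedge u v| ≤ 1 :=
  abs_le'.2 ⟨hQ.wedge_le_one hu hv, wedge_swap u v ▸ hQ.wedge_le_one hv hu⟩

end SmoothReflexivePolygon

section Hexagon

/-- The norm form of the Eisenstein integers in the basis `1, ω`. -/
def eisensteinNorm (v : Fin 2 → ℤ) : ℤ := v 0 ^ 2 - v 0 * v 1 + v 1 ^ 2

lemma eisensteinNorm_pos {v : Fin 2 → ℤ} (hv : v ≠ 0) : 0 < eisensteinNorm v := by
  have : v 0 ≠ 0 ∨ v 1 ≠ 0 := by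
    by_contra! h
    exact hv (funext (Fin.forall_fin_two.2 h))
  rw [eisensteinNorm]
  obtain h | h := this
  · nlinarith [sq_nonneg (v 0 - 2 * v 1), sq_pos_of_ne_zero h]
  · nlinarith [sq_nonneg (2 * v 0 - v 1), sq_pos_of_ne_zero h]

/-- The units of the Eisenstein integers in the basis `1, ω`, in counterclockwise order: the
vertices of the hexagon from which all smooth reflexive polygons are cut out. -/
def hexVec : Fin 6 → Fin 2 → ℤ := ![![1, 0], ![1, 1], ![0, 1], ![-1, 0], ![-1, -1], ![0, -1]]

lemma eisensteinNorm_hexVec : ∀ i, eisensteinNorm (hexVec i) = 1 := by decide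

lemma hexVec_ne_zero : ∀ i, hexVec i ≠ 0 := by decide

lemma hexVec_injective : Function.Injective hexVec := by decide

lemma hexVec_add_three : ∀ i, hexVec (i + 3) = -hexVec i := by decide

lemma isUnit_wedge_hexVec {i j : Fin 6} (hij : i ≠ j) (hneg : hexVec j ≠ -hexVec i) :
    IsUnit (wedge (hexVec i) (hexVec j)) := by
  rw [Int.isUnit_iff]
  revert i j
  decide

/-- The polygon spanned by the vertices of the hexagon with indices in `C`. -/
def hexPolygon (C : Finset (Fin 6)) : Set (Fin 2 → ℝ) := latticeHull (hexVec '' C)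

lemma nonzeroLatticePoints_hexPolygon (C : Finset (Fin 6)) :
    nonzeroLatticePoints (hexPolygon C) = hexVec '' C := by
  refine Subset.antisymm ?_ ?_
  · rintro v ⟨hv0, hv⟩
    by_contra hvC
    -- The polar form of the norm, paired with `v`, is a functional separating `v` from the hull.
    have hlt : ∀ h ∈ hexVec '' C, ![2 * v 0 - v 1, 2 * v 1 - v 0] ⬝ᵥ h < eisensteinNorm v + 1 := by
      rintro _ ⟨i, hi, rfl⟩
      have hsub := eisensteinNorm_pos (sub_ne_zero.2 fun h : v = hexVec i ↦ hvC ⟨i, hi, h.symm⟩)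
      have hone := eisensteinNorm_hexVec i
      simp only [eisensteinNorm, Pi.sub_apply, Matrix.vec2_dotProduct, Matrix.cons_val_zero,
        Matrix.cons_val_one] at *
      linarith
    have hself := dotProduct_lt_of_mem_latticeHull hlt hv
    have hpos := eisensteinNorm_pos hv0
    simp only [eisensteinNorm, Matrix.vec2_dotProduct, Matrix.cons_val_zero,
      Matrix.cons_val_one] at *
    linarith
  · rintro _ ⟨i, hi, rfl⟩
    exact ⟨hexVec_ne_zero i, castZ_mem_latticeHull (mem_image_of_mem _ hi)⟩

lemma interior_hexPolygon_inter_latPts_subset (C : Finset (Fin 6)) :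
    interior (hexPolygon C) ∩ latPts 2 ⊆ {0} := by
  rintro _ ⟨hv, v, rfl⟩
  have hball : hexPolygon C ⊆ Metric.closedBall 0 1 := by
    refine convexHull_min ?_ (convex_closedBall 0 1)
    rintro _ ⟨_, ⟨i, -, rfl⟩, rfl⟩
    rw [mem_closedBall_zero_iff, pi_norm_le_iff_of_nonneg zero_le_one]
    fin_cases i <;> simp [Fin.forall_fin_two, hexVec, castZ]
  have hv1 := interior_mono hball hv
  rw [interior_closedBall _ one_ne_zero, mem_ball_zero_iff] at hv1
  have hv0 : v = 0 := norm_castZ_lt_one_iff.1 hv1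
  exact hv0 ▸ castZ_zero

lemma smoothReflexivePolygon_hexPolygon {C : Finset (Fin 6)}
    (hC : 0 ∈ interior (hexPolygon C)) : SmoothReflexivePolygon (hexPolygon C) := by
  refine ⟨⟨C.image hexVec, by rw [hexPolygon, latticeHull, Finset.coe_image]⟩, hC, ?_, ?_⟩
  · refine (interior_hexPolygon_inter_latPts_subset C).antisymm ?_
    rintro _ rfl
    exact ⟨hC, 0, castZ_zero⟩
  · intro v w hv hw hvw hseg
    have hvertex : ∀ {u}, castZ u ∈ (hexPolygon C).extremePoints ℝ → ∃ i, hexVec i = u := by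
      intro u hu
      obtain ⟨_, ⟨i, -, rfl⟩, h⟩ := extremePoints_convexHull_subset hu
      exact ⟨i, castZ_injective h⟩
    obtain ⟨i, rfl⟩ := hvertex hv
    obtain ⟨j, rfl⟩ := hvertex hw
    refine isUnit_wedge_hexVec (fun h ↦ hvw (congrArg hexVec h)) fun hneg ↦ ?_
    have hmid : (0 : Fin 2 → ℝ) ∈ segment ℝ (castZ (hexVec i)) (castZ (hexVec j)) :=
      ⟨1 / 2, 1 / 2, by norm_num, by norm_num, by norm_num, by simp [hneg, castZ_neg]⟩
    exact (hseg hmid).2 hC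

lemma zero_mem_interior_hexPolygon {C T : Finset (Fin 6)} (hTC : T ⊆ C) (h1 : 1 ∈ T) (h5 : 5 ∈ T)
    (hsum : ∑ i ∈ T, hexVec i = 0) : 0 ∈ interior (hexPolygon C) := by
  have hspan : Submodule.span ℝ ((castZ ∘ hexVec) '' T) = ⊤ := by
    refine eq_top_iff.2 fun x _ ↦ ?_
    have hmem : ∀ i ∈ T, castZ (hexVec i) ∈ Submodule.span ℝ ((castZ ∘ hexVec) '' T) := fun i hi ↦
      Submodule.subset_span (mem_image_of_mem _ hi)
    have hx : x 0 • castZ (hexVec 1) + (x 0 - x 1) • castZ (hexVec 5) = x := by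
      funext i
      fin_cases i <;> simp [castZ, hexVec]
    exact hx ▸ add_mem (Submodule.smul_mem _ _ (hmem 1 h1)) (Submodule.smul_mem _ _ (hmem 5 h5))
  have hsum' : ∑ i ∈ T, (castZ ∘ hexVec) i = 0 := by
    funext j
    simpa [castZ] using congrArg (Int.cast : ℤ → ℝ) (congrFun hsum j)
  have hint := zero_mem_interior_convexHull_of_sum_eq_zero ⟨1, h1⟩ hspan hsum'
  rw [image_comp] at hint
  exact interior_mono (convexHull_mono (image_mono (image_mono hTC))) hint

/-- The hexagon vertices spanning the polygons of, in order, `ℙ²` blown up in three, two and one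
points, `ℙ¹ × ℙ¹` and `ℙ²`. -/
def delPezzoRays : Fin 5 → Finset (Fin 6) :=
  ![{0, 1, 2, 3, 4, 5}, {1, 2, 3, 4, 5}, {1, 3, 4, 5}, {1, 2, 4, 5}, {1, 3, 5}]

lemma zero_mem_interior_hexPolygon_delPezzoRays (j : Fin 5) :
    0 ∈ interior (hexPolygon (delPezzoRays j)) := by
  obtain ⟨T, hT, h1, h5, hsum⟩ :
      ∃ T ∈ (delPezzoRays j).powerset, 1 ∈ T ∧ 5 ∈ T ∧ ∑ i ∈ T, hexVec i = 0 := by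
    revert j
    decide
  exact zero_mem_interior_hexPolygon (Finset.mem_powerset.1 hT) h1 h5 hsum

lemma exists_image_hexVec_eq_of_linEquiv {C D : Finset (Fin 6)}
    (h : LinEquiv (hexPolygon C) (hexPolygon D)) :
    ∃ A : GL (Fin 2) ℤ, (A.1 *ᵥ ·) '' (hexVec '' C) = hexVec '' D := by
  obtain ⟨A, hA⟩ := linEquiv_iff.1 h
  refine ⟨A, ?_⟩
  rw [← nonzeroLatticePoints_hexPolygon, ← nonzeroLatticePoints_hexPolygon, hA,
    nonzeroLatticePoints_image]

lemma card_eq_of_linEquiv {C D : Finset (Fin 6)} (h : LinEquiv (hexPolygon C) (hexPolygon D)) :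
    C.card = D.card := by
  obtain ⟨A, hA⟩ := exists_image_hexVec_eq_of_linEquiv h
  have := congrArg ncard hA
  rwa [ncard_image_of_injective _ (Matrix.mulVec_injective_of_isUnit A.isUnit),
    ncard_image_of_injective _ hexVec_injective, ncard_image_of_injective _ hexVec_injective,
    ncard_coe_finset, ncard_coe_finset] at this

lemma forall_add_three_mem_of_linEquiv {C D : Finset (Fin 6)}
    (h : LinEquiv (hexPolygon C) (hexPolygon D)) (hC : ∀ i ∈ C, i + 3 ∈ C) :
    ∀ i ∈ D, i + 3 ∈ D := by
  obtain ⟨A, hA⟩ := exists_image_hexVec_eq_of_linEquiv h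
  intro i hi
  obtain ⟨_, ⟨j, hj, rfl⟩, hji : A.1 *ᵥ hexVec j = hexVec i⟩ := hA.ge ⟨i, hi, rfl⟩
  obtain ⟨m, hm, hmj : hexVec m = A.1 *ᵥ hexVec (j + 3)⟩ := hA.le ⟨_, ⟨j + 3, hC j hj, rfl⟩, rfl⟩
  rw [hexVec_add_three, Matrix.mulVec_neg, hji, ← hexVec_add_three] at hmj
  exact hexVec_injective hmj ▸ hm

lemma not_linEquiv_delPezzoRays {i j : Fin 5} (hij : i ≠ j) :
    ¬LinEquiv (hexPolygon (delPezzoRays i)) (hexPolygon (delPezzoRays j)) := by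
  intro h
  have hcard := card_eq_of_linEquiv h
  have hsymm := forall_add_three_mem_of_linEquiv h
  have hsymm' := forall_add_three_mem_of_linEquiv h.symm
  clear h
  revert i j
  decide

/-- Multiplication by `ω + 1`, the rotation by one step of the hexagon. -/
def hexRotation : GL (Fin 2) ℤ := ⟨!![1, -1; 1, 0], !![0, 1; -1, 1], by decide, by decide⟩

lemma hexRotation_pow_mulVec_hexVec : ∀ k i : Fin 6,
    (hexRotation ^ k.1).1 *ᵥ hexVec i = hexVec (i + k) := by decide

lemma linEquiv_hexPolygon_image_add (C : Finset (Fin 6)) (k : Fin 6) :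
    LinEquiv (hexPolygon C) (hexPolygon (C.image (· + k))) := by
  refine linEquiv_iff.2 ⟨hexRotation ^ k.1, ?_⟩
  simp only [hexPolygon, image_intMatrixAction_latticeHull, image_image,
    hexRotation_pow_mulVec_hexVec, Finset.coe_image]

lemma wedge_hexVec_neg_iff : ∀ k i : Fin 6,
    wedge (hexVec k) (hexVec i) < 0 ↔ i = k + 4 ∨ i = k + 5 := by decide

lemma exists_eq_image_delPezzoRays (C : Finset (Fin 6)) (hC : ∀ k, k + 4 ∈ C ∨ k + 5 ∈ C) :
    ∃ j k, C = (delPezzoRays j).image (· + k) := by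
  revert C
  decide

lemma exists_linEquiv_delPezzoRays {C : Finset (Fin 6)} (hC : 0 ∈ interior (hexPolygon C)) :
    ∃ j, LinEquiv (hexPolygon (delPezzoRays j)) (hexPolygon C) := by
  obtain ⟨j, k, rfl⟩ : ∃ j k, C = (delPezzoRays j).image (· + k) := by
    refine exists_eq_image_delPezzoRays C fun k ↦ ?_
    obtain ⟨_, ⟨i, hi, rfl⟩, hneg⟩ :=
      exists_wedge_neg_of_zero_mem_interior_latticeHull hC (hexVec_ne_zero k)
    obtain rfl | rfl := (wedge_hexVec_neg_iff k i).1 hneg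
    exacts [.inl hi, .inr hi]
  exact ⟨j, linEquiv_hexPolygon_image_add _ k⟩

end Hexagon

section HexagonalBasis

lemma exists_eq_hexVec_combo {u v w : Fin 2 → ℤ} (huv : wedge u v = 1) (hw : w ≠ 0)
    (huw : |wedge u w| ≤ 1) (hwv : |wedge w v| ≤ 1) (hsub : |wedge w v - wedge u w| ≤ 1) :
    ∃ i, hexVec i 0 • u + hexVec i 1 • v = w := by
  have hcombo := wedge_smul_eq u v w
  rw [huv, one_smul] at hcombo
  rw [hcombo]
  generalize wedge w v = x at *
  generalize wedge u w = y at *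
  rw [abs_le] at huw hwv hsub
  have hxy : x ≠ 0 ∨ y ≠ 0 := by
    by_contra! h
    exact hw (by simp [hcombo, h.1, h.2])
  obtain ⟨i, hi0, hi1⟩ : ∃ i, hexVec i 0 = x ∧ hexVec i 1 = y := by
    obtain ⟨hx, hx'⟩ := hwv
    obtain ⟨hy, hy'⟩ := huw
    interval_cases x <;> interval_cases y <;> first | omega | decide
  exact ⟨i, by rw [hi0, hi1]⟩

lemma exists_basis_forall_eq_hexVec_combo {L : Set (Fin 2 → ℤ)} (h0 : 0 ∉ L)
    (habs : ∀ u ∈ L, ∀ v ∈ L, |wedge u v| ≤ 1) {u v : Fin 2 → ℤ} (hu : u ∈ L) (hv : v ∈ L)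
    (huv : wedge u v = 1) :
    ∃ u' v', wedge u' v' = 1 ∧ ∀ w ∈ L, ∃ i, hexVec i 0 • u' + hexVec i 1 • v' = w := by
  by_cases hL : ∀ w ∈ L, |wedge w v - wedge u w| ≤ 1
  · exact ⟨u, v, huv, fun w hw ↦ exists_eq_hexVec_combo huv (ne_of_mem_of_not_mem hw h0)
      (habs u hu w hw) (habs w hw v hv) (hL w hw)⟩
  push Not at hL
  -- Now some `w ∈ L` is `±(u - v)`, and `|wedge w z| ≤ 1` is the inequality `hL` for `z` in the
  -- basis `-v, u`.
  obtain ⟨w, hw, hlt⟩ := hL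
  have hw_eq : w = u - v ∨ w = -(u - v) := by
    have hcombo := wedge_smul_eq u v w
    rw [huv, one_smul] at hcombo
    have hwv := abs_le.1 (habs w hw v hv)
    have huw := abs_le.1 (habs u hu w hw)
    have hcoeff : wedge w v = 1 ∧ wedge u w = -1 ∨ wedge w v = -1 ∧ wedge u w = 1 := by
      rw [lt_abs] at hlt
      omega
    obtain ⟨hx, hy⟩ | ⟨hx, hy⟩ := hcoeff <;> rw [hcombo, hx, hy]
    · exact .inl (by module)
    · exact .inr (by module)
  have hsub : ∀ z ∈ L, |wedge z u - wedge (-v) z| ≤ 1 := by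
    intro z hz
    have hwz := habs w hw z hz
    have hsum : wedge z u - wedge (-v) z = -wedge (u - v) z := by
      simp only [wedge, Pi.sub_apply, Pi.neg_apply]; ring
    have hneg : wedge (-(u - v)) z = -wedge (u - v) z := by
      simp only [wedge, Pi.sub_apply, Pi.neg_apply]; ring
    rw [hsum, abs_neg]
    obtain rfl | rfl := hw_eq
    · exact hwz
    · rwa [hneg, abs_neg] at hwz
  have hneg : ∀ z, wedge (-v) z = wedge z v := fun z ↦ by
    simp only [wedge, Pi.neg_apply]; ring
  exact ⟨-v, u, (hneg u).trans huv, fun z hz ↦ exists_eq_hexVec_combo ((hneg u).trans huv)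
    (ne_of_mem_of_not_mem hz h0) (hneg z ▸ habs z hz v hv) (habs z hz u hu) (hsub z hz)⟩

lemma exists_mulVec_hexVec_eq {u v : Fin 2 → ℤ} (huv : wedge u v = 1) :
    ∃ A : GL (Fin 2) ℤ, ∀ i, A.1 *ᵥ hexVec i = hexVec i 0 • u + hexVec i 1 • v := by
  have hunit : IsUnit !![u 0, v 0; u 1, v 1] := by
    have hdet : (!![u 0, v 0; u 1, v 1]).det = wedge u v := by
      rw [Matrix.det_fin_two_of, wedge, mul_comm (v 0)]
    rw [Matrix.isUnit_iff_isUnit_det, hdet, huv]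
    exact isUnit_one
  obtain ⟨A, hA⟩ := hunit
  refine ⟨A, fun i ↦ funext fun j ↦ ?_⟩
  rw [hA]
  fin_cases j <;> simp [Matrix.vecHead, Matrix.vecTail] <;> ring

lemma SmoothReflexivePolygon.exists_linEquiv_hexPolygon {Q : Set (Fin 2 → ℝ)}
    (hQ : SmoothReflexivePolygon Q) : ∃ C, LinEquiv (hexPolygon C) Q := by
  classical
  have h0 : 0 ∉ nonzeroLatticePoints Q := fun h ↦ h.1 rfl
  obtain ⟨v, hv, -⟩ := hQ.exists_wedge_neg (hexVec_ne_zero 0)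
  obtain ⟨u, hu, hvu⟩ := hQ.exists_wedge_neg hv.1
  have huv : wedge u v = 1 := by
    have := hQ.wedge_le_one hu hv
    have := wedge_swap u v
    omega
  obtain ⟨u', v', huv', hL⟩ := exists_basis_forall_eq_hexVec_combo h0
    (fun _ hu _ hv ↦ hQ.abs_wedge_le_one hu hv) hu hv huv
  obtain ⟨A, hA⟩ := exists_mulVec_hexVec_eq huv'
  refine ⟨({i | A.1 *ᵥ hexVec i ∈ nonzeroLatticePoints Q} : Finset (Fin 6)), linEquiv_iff.2 ⟨A, ?_⟩⟩
  rw [hexPolygon, image_intMatrixAction_latticeHull]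
  conv_lhs => rw [← hQ.latticeHull_nonzeroLatticePoints]
  congr 1
  refine Subset.antisymm (fun w hw ↦ ?_) ?_
  · obtain ⟨i, rfl⟩ := hL w hw
    rw [← hA] at hw ⊢
    exact ⟨_, ⟨i, by simpa using hw, rfl⟩, rfl⟩
  · rintro _ ⟨_, ⟨i, hi, rfl⟩, rfl⟩
    simpa using hi

end HexagonalBasis

/-- Up to lattice equivalence, there are exactly 5 smooth reflexive polygons
(corresponding to the 5 smooth toric del Pezzo surfaces). -/
theorem five_smooth_reflexive_polygons :
    ∃ reps : Fin 5 → Set (Fin 2 → ℝ),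
      (∀ i, SmoothReflexivePolygon (reps i)) ∧
      (∀ i j, i ≠ j → ¬ LinEquiv (reps i) (reps j)) ∧
      (∀ Q : Set (Fin 2 → ℝ), SmoothReflexivePolygon Q → ∃ i, LinEquiv Q (reps i)) := by
  refine ⟨fun i ↦ hexPolygon (delPezzoRays i), fun i ↦ ?_, fun i j ↦ ?_, fun Q hQ ↦ ?_⟩
  · exact smoothReflexivePolygon_hexPolygon (zero_mem_interior_hexPolygon_delPezzoRays i)
  · exact not_linEquiv_delPezzoRays
  · obtain ⟨C, hC⟩ := hQ.exists_linEquiv_hexPolygon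
    obtain ⟨i, hi⟩ := exists_linEquiv_delPezzoRays (hC.symm.zero_mem_interior hQ.2.1)
    exact ⟨i, (hi.trans hC).symm⟩
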